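/- There exists a natural number K with the following property. Let G₀ be a finite simple graph with at least K isolated vertices whose non-isolated vertices induce a graph consisting of one connected component C of type H together with further connected components D¹, …, Dʲ satisfying Σᵢ (F(Dⁱ) − 2) = 0. Then in the 3-regular graph game starting from G₀, the first player has a strategy that forces the event that some connected component of the current graph is 3-regular or has an eventual cut vertex; the second player likewise has such a strategy. -/

import Mathlib

/-!
The player who wants to reach the event is called the builder, and a vertex of degree 3 is called
saturated.  The event has occurred as soon as there is a nonempty set of saturated vertices whose
neighbours outside the set are all equal to one vertex (`goodEvent_of_sealed`).

If the event does not hold in the initial graph, every component with an edge has at least two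
unsaturated vertices, hence at least two degrees of freedom.  Since the effective freedom is 0,
each further component has exactly two degrees of freedom, so it is 3-regular but for two
vertices of degree 2; call this a blob.  The component of type ℋ is a blob too.

If there are at least two blobs, the builder joins two of them.  The result is a blob whose two
unsaturated vertices `q` and `t` are not adjacent.  If the opponent ignores them, joining `q` to
`t` completes a 3-regular component.  If the opponent joins one of them to a vertex `z` outside,
the builder joins the other one to `z`, which becomes an eventual cut vertex, or, when `z`
belongs to another blob, to the second unsaturated vertex of that blob, which yields a 3-regular
component.  The same replies punish an opponent who moves first and touches a blob
(`Blob.win_of_two`, `Blob.oppWin_of_two`).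

If the component of type ℋ is alone, only its two vertices of degree 2 and boundedly many isolated
vertices matter.  The position is then described by a finite list of edges between labels
(`Described`).  The builder wins by an explicit strategy tree (`Strat.first`, `Strat.second`),
which a Boolean check verifies against all replies up to the choice of isolated vertices; the
soundness of the check is `Strat.check_sound`.  Twenty isolated vertices suffice.
-/

open SimpleGraph

namespace GraphGame

/-- The degree of a vertex, defined via the cardinality of its neighbor set. -/
noncomputable def deg {V : Type} (G : SimpleGraph V) (v : V) : ℕ :=
  (G.neighborSet v).ncard

/-- The graph obtained from `G` by adding the edge between `u` and `v`. -/
def addEdge {V : Type} (G : SimpleGraph V) (u v : V) : SimpleGraph V :=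
  G ⊔ SimpleGraph.fromEdgeSet {s(u, v)}

/-- A legal move in the `k`-regular graph game: draw an edge between two distinct
non-adjacent vertices, so that afterwards every vertex still has degree at most `k`. -/
def LegalMove {V : Type} (k : ℕ) (G : SimpleGraph V) (u v : V) : Prop :=
  u ≠ v ∧ ¬ G.Adj u v ∧ ∀ w, deg (addEdge G u v) w ≤ k

/-- A position is terminal when no legal move remains. -/
def Terminal {V : Type} (k : ℕ) (G : SimpleGraph V) : Prop :=
  ∀ u v, ¬ LegalMove k G u v

/-- A strategy (a choice of an edge to draw at every position) is valid if it assigns a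
legal move to every non-terminal position. -/
def ValidStrategy {V : Type} (k : ℕ) (s : SimpleGraph V → V × V) : Prop :=
  ∀ G : SimpleGraph V, ¬ Terminal k G → LegalMove k G (s G).1 (s G).2

/-- `IsPlay k r s G₀ g` : `g` is a play of the `k`-regular graph game starting from `G₀`
in which the player moving at steps `i` with `i % 2 = r` (so `r = 0` for the first player
and `r = 1` for the second player) follows the strategy `s`, and the opponent moves
arbitrarily (legally).  Once a terminal position is reached the sequence stays constant. -/
def IsPlay {V : Type} (k r : ℕ) (s : SimpleGraph V → V × V) (G₀ : SimpleGraph V)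
    (g : ℕ → SimpleGraph V) : Prop :=
  g 0 = G₀ ∧ ∀ i : ℕ,
    (Terminal k (g i) → g (i + 1) = g i) ∧
    (¬ Terminal k (g i) →
      (i % 2 = r → g (i + 1) = addEdge (g i) (s (g i)).1 (s (g i)).2) ∧
      (i % 2 ≠ r → ∃ u v, LegalMove k (g i) u v ∧ g (i + 1) = addEdge (g i) u v))

/-- The player moving at steps `≡ r (mod 2)` has a strategy ensuring that the final graph
(i.e. the terminal graph reached at the end of every play) satisfies `P`. -/
def Ensures {V : Type} (k r : ℕ) (G₀ : SimpleGraph V) (P : SimpleGraph V → Prop) : Prop :=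
  ∃ s : SimpleGraph V → V × V, ValidStrategy k s ∧
    ∀ g : ℕ → SimpleGraph V, IsPlay k r s G₀ g →
      ∀ n, Terminal k (g n) → P (g n)

/-- The player moving at steps `≡ r (mod 2)` has a strategy forcing the event that at some
stage the current graph satisfies `P`. -/
def Forces {V : Type} (k r : ℕ) (G₀ : SimpleGraph V) (P : SimpleGraph V → Prop) : Prop :=
  ∃ s : SimpleGraph V → V × V, ValidStrategy k s ∧
    ∀ g : ℕ → SimpleGraph V, IsPlay k r s G₀ g → ∃ n, P (g n)

end GraphGame

namespace GraphGame

/-- `x` is an eventual cut vertex of `H`: the graph `H − x` (encoded by deleting from `H`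
all edges incident to `x`) has a connected component `S` not containing `x` such that `x`
has exactly one or two `H`-neighbors in `S` and every vertex of `S` has degree 3 in `H`. -/
def EventualCutVertex {V : Type} [DecidableEq V] (H : SimpleGraph V) (x : V) : Prop :=
  ∃ c : (H.deleteEdges (H.incidenceSet x)).ConnectedComponent,
    x ∉ c.supp ∧
    ((H.neighborSet x ∩ c.supp).ncard = 1 ∨ (H.neighborSet x ∩ c.supp).ncard = 2) ∧
    ∀ v ∈ c.supp, deg H v = 3

/-- The event that some connected component of `G` is 3-regular or has an eventual cut
vertex. -/
def GoodEvent {V : Type} [DecidableEq V] (G : SimpleGraph V) : Prop :=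
  (∃ c : G.ConnectedComponent, ∀ v ∈ c.supp, deg G v = 3) ∨
  (∃ x : V, EventualCutVertex G x)

/-- The degrees of freedom of a set `A` of vertices: `F(A) = Σ_{v ∈ A} (3 - deg v)`,
degrees taken in the ambient graph. -/
noncomputable def Fdof {V : Type} (G : SimpleGraph V) (A : Set V) : ℤ :=
  ∑ᶠ v ∈ A, (3 - (deg G v : ℤ))

/-- The effective degrees of freedom of a union `D` of connected components:
`E(D) = Σᵢ (F(Dⁱ) - 2)`, the sum ranging over the connected components contained in `D`. -/
noncomputable def Edof {V : Type} (G : SimpleGraph V) (D : Set V) : ℤ :=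
  ∑ᶠ c ∈ {c : G.ConnectedComponent | c.supp ⊆ D}, (Fdof G c.supp - 2)

/-- A graph is of type 𝒜 if one of its connected components is a single edge (two adjacent
vertices of degree 1) and every other connected component is 3-regular except for exactly
two vertices of degree 2, which are not adjacent. -/
def IsTypeA {α : Type} (H : SimpleGraph α) : Prop :=
  ∃ a b : α, H.Adj a b ∧ deg H a = 1 ∧ deg H b = 1 ∧
    ∀ c : H.ConnectedComponent, c ≠ H.connectedComponentMk a →
      (∀ v ∈ c.supp, deg H v = 2 ∨ deg H v = 3) ∧
      ({v ∈ c.supp | deg H v = 2}).ncard = 2 ∧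
      (∀ u v : α, u ∈ c.supp → v ∈ c.supp → deg H u = 2 → deg H v = 2 → ¬ H.Adj u v)

/-- A connected graph is of type ℬ if it is 3-regular except for exactly three vertices of
degree 2, exactly two of which are adjacent. -/
def IsTypeB {α : Type} (H : SimpleGraph α) : Prop :=
  H.Connected ∧ (∀ v, deg H v = 2 ∨ deg H v = 3) ∧
  ∃ u v w : α, u ≠ v ∧ u ≠ w ∧ v ≠ w ∧
    {x : α | deg H x = 2} = {u, v, w} ∧ H.Adj u v ∧ ¬ H.Adj u w ∧ ¬ H.Adj v w

/-- A connected component is of type ℋ if it is 3-regular except for exactly two vertices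
of degree 2, which are adjacent. -/
def CompTypeH {V : Type} (G : SimpleGraph V) (c : G.ConnectedComponent) : Prop :=
  (∀ v ∈ c.supp, deg G v = 2 ∨ deg G v = 3) ∧
  ({v ∈ c.supp | deg G v = 2}).ncard = 2 ∧
  ∀ u v : V, u ∈ c.supp → v ∈ c.supp → deg G u = 2 → deg G v = 2 → u ≠ v → G.Adj u v

end GraphGame


namespace GraphGame

variable {V : Type}

/-! ### Adding an edge -/

lemma addEdge_adj {G : SimpleGraph V} {u v : V} (huv : u ≠ v) (a b : V) :
    (addEdge G u v).Adj a b ↔ G.Adj a b ∨ (a = u ∧ b = v) ∨ (a = v ∧ b = u) := by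
  simp only [addEdge, SimpleGraph.sup_adj, SimpleGraph.fromEdgeSet_adj, Set.mem_singleton_iff,
    Sym2.eq_iff]
  constructor
  · rintro (h | ⟨h, -⟩)
    · exact Or.inl h
    · exact Or.inr h
  · rintro (h | h)
    · exact Or.inl h
    · refine Or.inr ⟨h, ?_⟩
      rcases h with ⟨rfl, rfl⟩ | ⟨rfl, rfl⟩
      · exact huv
      · exact huv.symm

lemma addEdge_comm (G : SimpleGraph V) (u v : V) : addEdge G u v = addEdge G v u := by
  simp only [addEdge, Sym2.eq_swap]

lemma LegalMove.symm {k : ℕ} {G : SimpleGraph V} {u v : V} (h : LegalMove k G u v) :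
    LegalMove k G v u :=
  ⟨h.1.symm, fun e => h.2.1 e.symm, by rw [addEdge_comm]; exact h.2.2⟩

lemma deg_addEdge [Finite V] {G : SimpleGraph V} {u v : V} (huv : u ≠ v) (hn : ¬ G.Adj u v)
    (w : V) [Decidable (w = u)] [Decidable (w = v)] :
    deg (addEdge G u v) w = deg G w + (if w = u then 1 else 0) + (if w = v then 1 else 0) := by
  unfold deg
  by_cases hu : w = u
  · subst hu
    have : (addEdge G w v).neighborSet w = insert v (G.neighborSet w) := by
      ext x
      simp only [SimpleGraph.mem_neighborSet, addEdge_adj huv, Set.mem_insert_iff]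
      grind
    rw [this, Set.ncard_insert_of_notMem (by simpa using hn) (Set.toFinite _)]
    simp [huv]
  · by_cases hv : w = v
    · subst hv
      have : (addEdge G u w).neighborSet w = insert u (G.neighborSet w) := by
        ext x
        simp only [SimpleGraph.mem_neighborSet, addEdge_adj huv, Set.mem_insert_iff]
        grind
      rw [this, Set.ncard_insert_of_notMem (by simpa using fun h => hn h.symm) (Set.toFinite _)]
      simp [hu]
    · have : (addEdge G u v).neighborSet w = G.neighborSet w := by
        ext x
        simp only [SimpleGraph.mem_neighborSet, addEdge_adj huv]
        grind
      rw [this]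
      simp [hu, hv]

lemma legalMove_iff [Finite V] {G : SimpleGraph V} (hG : ∀ w, deg G w ≤ 3) (u v : V) :
    LegalMove 3 G u v ↔ u ≠ v ∧ ¬ G.Adj u v ∧ deg G u < 3 ∧ deg G v < 3 := by
  classical
  constructor
  · rintro ⟨h1, h2, h3⟩
    have hu := h3 u
    have hv := h3 v
    rw [deg_addEdge h1 h2] at hu hv
    simp only [if_true] at hu hv
    exact ⟨h1, h2, by omega, by omega⟩
  · rintro ⟨h1, h2, hu, hv⟩
    refine ⟨h1, h2, fun w => ?_⟩
    rw [deg_addEdge h1 h2]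
    have := hG w
    split_ifs with a b b
    · exact absurd (a.symm.trans b) h1
    · subst a; omega
    · subst b; omega
    · omega

lemma lt_addEdge {G : SimpleGraph V} {u v : V} (h : LegalMove 3 G u v) : G < addEdge G u v := by
  refine lt_of_le_of_ne le_sup_left fun e => h.2.1 ?_
  rw [e, addEdge_adj h.1]
  simp

lemma deg_pos_of_adj [Finite V] {G : SimpleGraph V} {a b : V} (h : G.Adj a b) : 0 < deg G a :=
  (Set.ncard_pos (Set.toFinite _)).2 ⟨b, h⟩

lemma exists_adj_of_deg_pos {G : SimpleGraph V} {a : V} (h : 0 < deg G a) : ∃ b, G.Adj a b := by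
  obtain ⟨b, hb⟩ := Set.nonempty_of_ncard_ne_zero h.ne'
  exact ⟨b, hb⟩

/-! ### Saturated sets with at most one outer neighbour -/

/-- A set containing a vertex and closed under adjacency contains the whole component. -/
lemma supp_subset_of_closed {G : SimpleGraph V} {S : Set V} {s : V} (hs : s ∈ S)
    (h : ∀ a ∈ S, ∀ b, G.Adj a b → b ∈ S) : (G.connectedComponentMk s).supp ⊆ S := by
  intro v hv
  have hr : G.Reachable s v := (SimpleGraph.ConnectedComponent.exact hv).symm
  obtain ⟨p⟩ := hr
  induction p with
  | nil => exact hs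
  | cons e p ih => exact ih (h _ hs _ e) (SimpleGraph.ConnectedComponent.sound p.reachable.symm)

lemma goodEvent_of_closed [DecidableEq V] {G : SimpleGraph V} {S : Set V} (hne : S.Nonempty)
    (h3 : ∀ v ∈ S, deg G v = 3) (h : ∀ a ∈ S, ∀ b, G.Adj a b → b ∈ S) : GoodEvent G := by
  obtain ⟨s, hs⟩ := hne
  exact Or.inl ⟨G.connectedComponentMk s, fun v hv => h3 v (supp_subset_of_closed hs h hv)⟩

/-- The criterion for the event used throughout: a nonempty set of saturated vertices all of
whose outside neighbours coincide with one vertex `x`.  If `x` sends no edge or three edges to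
a component of the set, that component, possibly with `x` added, is a 3-regular component of the
graph; otherwise `x` is an eventual cut vertex. -/
lemma goodEvent_of_sealed [Finite V] [DecidableEq V] {G : SimpleGraph V}
    (hG : ∀ v, deg G v ≤ 3) {S : Set V} (x : V) (hne : S.Nonempty) (h3 : ∀ v ∈ S, deg G v = 3)
    (h : ∀ a ∈ S, ∀ b, G.Adj a b → b ∈ S ∨ b = x) : GoodEvent G := by
  by_cases hx : x ∈ S
  · exact goodEvent_of_closed hne h3 fun a ha b hab => (h a ha b hab).elim id fun e => e ▸ hx
  obtain ⟨s, hs⟩ := hne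
  set H := G.deleteEdges (G.incidenceSet x) with hH
  have hadj : ∀ a b, H.Adj a b ↔ G.Adj a b ∧ a ≠ x ∧ b ≠ x := by
    intro a b
    rw [hH, SimpleGraph.deleteEdges_adj]
    constructor
    · rintro ⟨h1, h2⟩
      refine ⟨h1, ?_, ?_⟩
      · rintro rfl
        exact h2 (G.mk'_mem_incidenceSet_left_iff.2 h1)
      · rintro rfl
        exact h2 (G.mk'_mem_incidenceSet_right_iff.2 h1)
    · rintro ⟨h1, h2, h4⟩
      refine ⟨h1, fun h5 => ?_⟩
      rcases (G.mk'_mem_incidenceSet_iff.1 h5).2 with e | e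
      · exact h2 e.symm
      · exact h4 e.symm
  set c := H.connectedComponentMk s with hc
  have hcS : c.supp ⊆ S := supp_subset_of_closed hs fun a ha b hab => by
    rw [hadj] at hab
    exact (h a ha b hab.1).resolve_right hab.2.2
  have hxc : x ∉ c.supp := fun e => hx (hcS e)
  -- within `G`, edges leave the component `c` only towards `x`
  have hcl : ∀ a ∈ c.supp, ∀ b, G.Adj a b → b ∈ c.supp ∨ b = x := by
    intro a ha b hab
    by_cases hb : b = x
    · exact Or.inr hb
    · left
      have : H.Adj a b := (hadj a b).2 ⟨hab, fun e => hxc (e ▸ ha), hb⟩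
      have h2 : H.connectedComponentMk a = c := ha
      change H.connectedComponentMk b = c
      rw [← h2]
      exact SimpleGraph.ConnectedComponent.sound this.symm.reachable
  have hsc : s ∈ c.supp := rfl
  have hfin : (G.neighborSet x ∩ c.supp).Finite := Set.toFinite _
  have hle : (G.neighborSet x ∩ c.supp).ncard ≤ deg G x :=
    Set.ncard_le_ncard Set.inter_subset_left (Set.toFinite _)
  have hx3 := hG x
  rcases Nat.lt_or_ge (G.neighborSet x ∩ c.supp).ncard 1 with h0 | h1
  · refine goodEvent_of_closed ⟨s, hsc⟩ (fun v hv => h3 v (hcS hv)) fun a ha b hab => ?_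
    refine (hcl a ha b hab).resolve_right ?_
    rintro rfl
    have : (G.neighborSet b ∩ c.supp) = ∅ := (Set.ncard_eq_zero hfin).1 (by omega)
    exact Set.notMem_empty a (this ▸ ⟨hab.symm, ha⟩)
  · rcases Nat.lt_or_ge (G.neighborSet x ∩ c.supp).ncard 3 with h2 | h2
    · exact Or.inr ⟨x, c, hxc, by omega, fun v hv => h3 v (hcS hv)⟩
    · have heq : G.neighborSet x ∩ c.supp = G.neighborSet x :=
        Set.eq_of_subset_of_ncard_le Set.inter_subset_left
          (by change deg G x ≤ _; omega) (Set.toFinite _)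
      refine goodEvent_of_closed (S := insert x c.supp) ⟨x, Or.inl rfl⟩ ?_ ?_
      · rintro v (rfl | hv)
        · omega
        · exact h3 v (hcS hv)
      · rintro a (rfl | ha) b hab
        · have : b ∈ G.neighborSet a ∩ c.supp := by rw [heq]; exact hab
          exact Or.inr this.2
        · rcases hcl a ha b hab with h5 | h5
          · exact Or.inr h5
          · exact Or.inl h5

/-! ### Winning positions and strategies -/

/-- The player who wants to reach `P` (called the builder) is about to move and can force `P`. -/
inductive Win (P : SimpleGraph V → Prop) : SimpleGraph V → Prop
  | now {G : SimpleGraph V} : P G → Win P G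
  | move {G : SimpleGraph V} (u v : V) : LegalMove 3 G u v →
      (P (addEdge G u v) ∨ ¬ Terminal 3 (addEdge G u v)) →
      (∀ a b, ¬ P (addEdge G u v) → LegalMove 3 (addEdge G u v) a b →
        Win P (addEdge (addEdge G u v) a b)) → Win P G

/-- The opponent of the builder is about to move, and the builder can force `P`. -/
def OppWin (P : SimpleGraph V → Prop) (G : SimpleGraph V) : Prop :=
  P G ∨ (¬ Terminal 3 G ∧ ∀ a b, LegalMove 3 G a b → Win P (addEdge G a b))

lemma win_of_oppWin {P : SimpleGraph V → Prop} {G : SimpleGraph V} {u v : V}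
    (h : LegalMove 3 G u v) (h2 : OppWin P (addEdge G u v)) : Win P G := by
  refine Win.move u v h (h2.imp id And.left) fun a b hn hl => ?_
  exact (h2.resolve_left hn).2 a b hl

lemma win_of_move {P : SimpleGraph V → Prop} {G : SimpleGraph V} {u v : V}
    (h : LegalMove 3 G u v) (h2 : P (addEdge G u v)) : Win P G :=
  win_of_oppWin h (Or.inl h2)

lemma Win.cases {P : SimpleGraph V → Prop} {G : SimpleGraph V} (h : Win P G) :
    P G ∨ ∃ p : V × V, LegalMove 3 G p.1 p.2 ∧ OppWin P (addEdge G p.1 p.2) := by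
  cases h with
  | now h => exact Or.inl h
  | move u v h h1 h2 =>
    refine Or.inr ⟨(u, v), h, ?_⟩
    by_cases hP : P (addEdge G u v)
    · exact Or.inl hP
    · exact Or.inr ⟨h1.resolve_left hP, fun a b hl => h2 a b hP hl⟩

open Classical in
/-- The positional strategy that moves to a position won for the builder whenever this is
possible, and otherwise makes any legal move. -/
noncomputable def greedy [Nonempty V] (P : SimpleGraph V → Prop) (G : SimpleGraph V) : V × V :=
  if h : ∃ p : V × V, LegalMove 3 G p.1 p.2 ∧ OppWin P (addEdge G p.1 p.2) then h.choose
  else if h : ∃ p : V × V, LegalMove 3 G p.1 p.2 then h.choose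
  else Classical.arbitrary _

lemma greedy_valid [Nonempty V] (P : SimpleGraph V → Prop) : ValidStrategy 3 (greedy P) := by
  intro G hG
  have hex : ∃ p : V × V, LegalMove 3 G p.1 p.2 := by
    unfold Terminal at hG
    push Not at hG
    obtain ⟨u, v, h⟩ := hG
    exact ⟨(u, v), h⟩
  unfold greedy
  split_ifs with h
  · exact h.choose_spec.1
  · exact hex.choose_spec

lemma greedy_spec [Nonempty V] {P : SimpleGraph V → Prop} {G : SimpleGraph V}
    (h : ∃ p : V × V, LegalMove 3 G p.1 p.2 ∧ OppWin P (addEdge G p.1 p.2)) :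
    LegalMove 3 G (greedy P G).1 (greedy P G).2 ∧
      OppWin P (addEdge G (greedy P G).1 (greedy P G).2) := by
  unfold greedy
  rw [dif_pos h]
  exact h.choose_spec

/-- The greedy strategy reaches `P` from a won position: the edge set grows strictly, so the
play cannot go through won positions forever. -/
lemma greedy_wins [Finite V] [Nonempty V] {P : SimpleGraph V → Prop} {r : ℕ}
    {G₀ : SimpleGraph V} {g : ℕ → SimpleGraph V} (hg : IsPlay 3 r (greedy P) G₀ g) :
    ∀ (G : SimpleGraph V) (i : ℕ), g i = G → i % 2 = r → r < 2 → Win P G → ∃ n, P (g n) := by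
  intro G
  induction G using WellFoundedGT.induction with
  | ind G ih =>
    intro i hi hr hr2 hW
    rcases hW.cases with hP | hex
    · exact ⟨i, hi ▸ hP⟩
    obtain ⟨hl, ho⟩ := greedy_spec hex
    have hnt : ¬ Terminal 3 (g i) := fun ht => ht _ _ (hi ▸ hl)
    have h1 := ((hg.2 i).2 hnt).1 hr
    rw [hi] at h1
    rcases ho with hP | ⟨hnt2, ho⟩
    · exact ⟨i + 1, h1 ▸ hP⟩
    obtain ⟨a, b, hab, h2⟩ := ((hg.2 (i + 1)).2 (by rwa [h1])).2 (by omega)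
    rw [h1] at hab h2
    exact ih _ ((lt_addEdge hl).trans (lt_addEdge hab)) (i + 1 + 1) h2 (by omega) hr2
      (ho a b hab)

lemma forces_of_win [Finite V] [Nonempty V] {P : SimpleGraph V → Prop} {G₀ : SimpleGraph V}
    (h : Win P G₀) : Forces 3 0 G₀ P :=
  ⟨greedy P, greedy_valid P, fun _ hg => greedy_wins hg G₀ 0 hg.1 rfl (by norm_num) h⟩

lemma forces_of_oppWin [Finite V] [Nonempty V] {P : SimpleGraph V → Prop} {G₀ : SimpleGraph V}
    (h : OppWin P G₀) : Forces 3 1 G₀ P := by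
  refine ⟨greedy P, greedy_valid P, fun g hg => ?_⟩
  rcases h with hP | ⟨hnt, h⟩
  · exact ⟨0, hg.1.symm ▸ hP⟩
  obtain ⟨a, b, hab, h1⟩ := ((hg.2 0).2 (by rwa [hg.1])).2 (by norm_num)
  rw [hg.1] at hab h1
  exact greedy_wins hg _ 1 h1 rfl (by norm_num) (h a b hab)

/-! ### Positions with at least two components of freedom two -/

/-- A union `A` of components all of whose vertices are saturated except for two vertices
`p ≠ q` of degree 2. -/
structure Blob (G : SimpleGraph V) (A : Set V) (p q : V) : Prop where
  ne : p ≠ q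
  memp : p ∈ A
  memq : q ∈ A
  closed : ∀ a ∈ A, ∀ b, G.Adj a b → b ∈ A
  degp : deg G p = 2
  degq : deg G q = 2
  deg3 : ∀ v ∈ A, v ≠ p → v ≠ q → deg G v = 3

lemma Blob.symm {G : SimpleGraph V} {A : Set V} {p q : V} (h : Blob G A p q) : Blob G A q p :=
  ⟨h.ne.symm, h.memq, h.memp, h.closed, h.degq, h.degp, fun v hv h1 h2 => h.deg3 v hv h2 h1⟩

lemma Blob.eq_or_eq {G : SimpleGraph V} {A : Set V} {p q z : V} (h : Blob G A p q) (hz : z ∈ A)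
    (hd : deg G z < 3) : z = p ∨ z = q := by
  by_contra hc
  push Not at hc
  have := h.deg3 z hz hc.1 hc.2
  omega

/-- Joining the two unsaturated vertices of a blob completes it. -/
lemma Blob.join [Finite V] [DecidableEq V] {G : SimpleGraph V} (hG : ∀ v, deg G v ≤ 3)
    {A : Set V} {p q : V} (h : Blob G A p q) (hn : ¬ G.Adj p q) :
    LegalMove 3 G p q ∧ GoodEvent (addEdge G p q) := by
  have hd := h.degp
  have hd' := h.degq
  refine ⟨(legalMove_iff hG p q).2 ⟨h.ne, hn, by omega, by omega⟩, ?_⟩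
  refine goodEvent_of_closed ⟨p, h.memp⟩ (fun v hv => ?_) fun a ha b hab => ?_
  · rw [deg_addEdge h.ne hn]
    by_cases h1 : v = p
    · subst h1; simp [h.ne, hd]
    · by_cases h2 : v = q
      · subst h2; simp [h1, hd']
      · simp [h1, h2, h.deg3 v hv h1 h2]
  · rw [addEdge_adj h.ne] at hab
    rcases hab with hab | ⟨-, rfl⟩ | ⟨-, rfl⟩
    · exact h.closed a ha b hab
    · exact h.memq
    · exact h.memp

/-- In two blobs that share `p` but not the other unsaturated vertex, the intersection has `p`
as its only unsaturated vertex, so the event has already occurred. -/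
lemma Blob.partner_unique [Finite V] [DecidableEq V] {G : SimpleGraph V} (hG : ∀ v, deg G v ≤ 3)
    (hP : ¬ GoodEvent G) {A B : Set V} {p q r : V} (hA : Blob G A p q) (hB : Blob G B p r) :
    q = r := by
  by_contra hqr
  apply hP
  have hqB : q ∉ B := fun hq => by
    rcases hB.eq_or_eq hq (by rw [hA.degq]; norm_num) with e | e
    · exact hA.ne e.symm
    · exact hqr e
  have hdp := hA.degp
  obtain ⟨b, hb⟩ := exists_adj_of_deg_pos (G := G) (a := p) (by omega)
  refine goodEvent_of_sealed hG (S := (A ∩ B) \ {p}) p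
    ⟨b, ⟨hA.closed _ hA.memp _ hb, hB.closed _ hB.memp _ hb⟩, fun e => ?_⟩ ?_ ?_
  · exact G.ne_of_adj hb (Set.mem_singleton_iff.1 e).symm
  · rintro v ⟨⟨hvA, hvB⟩, hvp⟩
    exact hA.deg3 v hvA hvp fun e => hqB (e ▸ hvB)
  · rintro a ⟨⟨haA, haB⟩, -⟩ c hc
    by_cases hcp : c = p
    · exact Or.inr hcp
    · exact Or.inl ⟨⟨hA.closed _ haA _ hc, hB.closed _ haB _ hc⟩, hcp⟩

lemma Blob.partner_notMem [Finite V] [DecidableEq V] {G : SimpleGraph V}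
    (hG : ∀ v, deg G v ≤ 3) (hP : ¬ GoodEvent G) {A B : Set V} {p q z z' : V}
    (hA : Blob G A p q) (hB : Blob G B z z') (hz : z ∉ A) : z' ∉ A := by
  intro hz'
  rcases hA.eq_or_eq hz' (by rw [hB.degq]; norm_num) with e | e
  · subst e
    exact hz (Blob.partner_unique hG hP hA hB.symm ▸ hA.memq)
  · subst e
    exact hz (Blob.partner_unique hG hP hA.symm hB.symm ▸ hA.memp)

/-- The ambient hypothesis for positions with several blobs: every vertex of degree 2 is one of
the two unsaturated vertices of some blob. -/
def Tame (G : SimpleGraph V) : Prop :=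
  (∀ v, deg G v ≤ 3) ∧ ∀ z, deg G z = 2 → ∃ B z', Blob G B z z'

lemma deg_addEdge_le [Finite V] {G : SimpleGraph V} {u v : V} (h : LegalMove 3 G u v) :
    ∀ w, deg (addEdge G u v) w ≤ 3 := h.2.2

/-- Once an edge is attached to a blob, the builder can immediately reach the event. -/
lemma Blob.touch [Finite V] [DecidableEq V] {G : SimpleGraph V} (hG : Tame G)
    (hP : ¬ GoodEvent G) {A : Set V} {p q z : V} (hA : Blob G A p q) (hl : LegalMove 3 G p z) :
    Win GoodEvent (addEdge G p z) := by
  have hl' := (legalMove_iff hG.1 p z).1 hl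
  obtain ⟨hpz, hnpz, -, hdz⟩ := hl'
  have hG' := deg_addEdge_le hl
  by_cases hzq : z = q
  · subst hzq
    exact Win.now (hA.join hG.1 hnpz).2
  have hzA : z ∉ A := fun h => by
    rcases hA.eq_or_eq h hdz with e | e
    · exact hpz e.symm
    · exact hzq e
  have hdp := hA.degp
  have hdq := hA.degq
  have hqp := hA.ne.symm
  have hqz : q ≠ z := fun e => hzq e.symm
  have hdq' : deg (addEdge G p z) q = 2 := by
    rw [deg_addEdge hpz hnpz]; simp [hqp, hqz, hdq]
  by_cases hz2 : deg G z = 2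
  · -- the other end lies in a second blob: join the two remaining unsaturated vertices
    obtain ⟨B, z', hB⟩ := hG.2 z hz2
    have hz'A : z' ∉ A := hA.partner_notMem hG.1 hP hB hzA
    have hpz' : z' ≠ p := fun e => hz'A (e ▸ hA.memp)
    have hqz' : q ≠ z' := fun e => hz'A (e ▸ hA.memq)
    have hdz' : deg (addEdge G p z) z' = 2 := by
      rw [deg_addEdge hpz hnpz]; simp [hpz', hB.ne.symm, hB.degq]
    have hna : ¬ (addEdge G p z).Adj q z' := by
      rw [addEdge_adj hpz]
      rintro (h | ⟨h, -⟩ | ⟨h, -⟩)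
      · exact hz'A (hA.closed _ hA.memq _ h)
      · exact hqp h
      · exact hqz h
    refine win_of_move ((legalMove_iff hG' q z').2 ⟨hqz', hna, by omega, by omega⟩) ?_
    refine goodEvent_of_closed (S := A ∪ B) ⟨p, Or.inl hA.memp⟩ ?_ ?_
    · intro v hv
      rw [deg_addEdge hqz' hna, deg_addEdge hpz hnpz]
      by_cases h1 : v = p
      · subst h1; simp [hpz, hpz'.symm, hA.ne, hdp]
      by_cases h2 : v = z
      · subst h2; simp [hpz.symm, hqz.symm, hB.ne, hz2]
      by_cases h3 : v = q
      · subst h3; simp [hqp, hqz, hqz', hdq]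
      by_cases h4 : v = z'
      · subst h4; simp [hpz', hqz'.symm, hB.ne.symm, hB.degq]
      · have : deg G v = 3 := hv.elim (fun h => hA.deg3 v h h1 h3) fun h => hB.deg3 v h h2 h4
        simp [h1, h2, h3, h4, this]
    · intro a ha b hab
      rw [addEdge_adj hqz', addEdge_adj hpz] at hab
      rcases hab with (hab | ⟨-, rfl⟩ | ⟨-, rfl⟩) | ⟨-, rfl⟩ | ⟨-, rfl⟩
      · exact ha.imp (fun h => hA.closed _ h _ hab) fun h => hB.closed _ h _ hab
      · exact Or.inr hB.memp
      · exact Or.inl hA.memp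
      · exact Or.inr hB.memq
      · exact Or.inl hA.memq
  · -- the other end has degree at most 1: join the remaining unsaturated vertex to it as well
    have hdz1 : deg (addEdge G p z) z < 3 := by
      rw [deg_addEdge hpz hnpz]; simp [hpz.symm]; omega
    have hna : ¬ (addEdge G p z).Adj q z := by
      rw [addEdge_adj hpz]
      rintro (h | ⟨h, -⟩ | ⟨h, -⟩)
      · exact hzA (hA.closed _ hA.memq _ h)
      · exact hqp h
      · exact hqz h
    have hl2 := (legalMove_iff hG' q z).2 ⟨hqz, hna, by omega, hdz1⟩
    refine win_of_move hl2 (goodEvent_of_sealed (deg_addEdge_le hl2) (S := A) z ⟨p, hA.memp⟩ ?_ ?_)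
    · intro v hv
      rw [deg_addEdge hqz hna, deg_addEdge hpz hnpz]
      have h2 : v ≠ z := fun e => hzA (e ▸ hv)
      by_cases h1 : v = p
      · subst h1; simp [hpz, hA.ne, hdp]
      by_cases h3 : v = q
      · subst h3; simp [hqp, hqz, hdq]
      · simp [h1, h2, h3, hA.deg3 v hv h1 h3]
    · intro a ha b hab
      rw [addEdge_adj hqz, addEdge_adj hpz] at hab
      rcases hab with (hab | ⟨-, rfl⟩ | ⟨-, rfl⟩) | ⟨-, rfl⟩ | ⟨-, rfl⟩
      · exact Or.inl (hA.closed _ ha _ hab)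
      · exact Or.inr rfl
      · exact Or.inl hA.memp
      · exact Or.inr rfl
      · exact Or.inl hA.memq

/-- A blob survives every move that avoids its two unsaturated vertices. -/
lemma Blob.addEdge [Finite V] [DecidableEq V] {G : SimpleGraph V} (hG : ∀ v, deg G v ≤ 3)
    {A : Set V} {p q u v : V} (hA : Blob G A p q) (hl : LegalMove 3 G u v)
    (hup : u ≠ p) (huq : u ≠ q) (hvp : v ≠ p) (hvq : v ≠ q) :
    Blob (addEdge G u v) A p q := by
  obtain ⟨huv, hn, hdu, hdv⟩ := (legalMove_iff hG u v).1 hl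
  have huA : u ∉ A := fun h => (hA.eq_or_eq h hdu).elim hup huq
  have hvA : v ∉ A := fun h => (hA.eq_or_eq h hdv).elim hvp hvq
  have hdeg : ∀ w ∈ A, deg (GraphGame.addEdge G u v) w = deg G w := by
    intro w hw
    rw [deg_addEdge huv hn]
    have h1 : w ≠ u := fun e => huA (e ▸ hw)
    have h2 : w ≠ v := fun e => hvA (e ▸ hw)
    simp [h1, h2]
  refine ⟨hA.ne, hA.memp, hA.memq, ?_, ?_, ?_, ?_⟩
  · intro a ha b hab
    rw [addEdge_adj huv] at hab
    rcases hab with hab | ⟨rfl, -⟩ | ⟨rfl, -⟩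
    · exact hA.closed a ha b hab
    · exact absurd ha huA
    · exact absurd ha hvA
  · rw [hdeg p hA.memp, hA.degp]
  · rw [hdeg q hA.memq, hA.degq]
  · intro w hw h1 h2
    rw [hdeg w hw, hA.deg3 w hw h1 h2]

/-- If the unsaturated vertices of some blob are not adjacent, the builder threatens to join them,
so the opponent must use one of them, which loses to `Blob.touch`. -/
lemma Blob.oppWin [Finite V] [DecidableEq V] {G : SimpleGraph V} (hG : Tame G)
    {A : Set V} {p q : V} (hA : Blob G A p q) (hpq : ¬ G.Adj p q) : OppWin GoodEvent G := by
  by_cases hP : GoodEvent G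
  · exact Or.inl hP
  refine Or.inr ⟨fun ht => ht p q (hA.join hG.1 hpq).1, fun u v hl => ?_⟩
  by_cases h1 : u = p
  · subst h1; exact hA.touch hG hP hl
  by_cases h2 : u = q
  · subst h2; exact hA.symm.touch hG hP hl
  by_cases h3 : v = p
  · subst h3; rw [addEdge_comm]; exact hA.touch hG hP hl.symm
  by_cases h4 : v = q
  · subst h4; rw [addEdge_comm]; exact hA.symm.touch hG hP hl.symm
  have hA' := hA.addEdge hG.1 hl h1 h2 h3 h4
  have hn : ¬ (GraphGame.addEdge G u v).Adj p q := by
    rw [addEdge_adj hl.1]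
    rintro (h | ⟨h, -⟩ | ⟨h, -⟩)
    · exact hpq h
    · exact h1 h.symm
    · exact h3 h.symm
  obtain ⟨h5, h6⟩ := hA'.join (deg_addEdge_le hl) hn
  exact win_of_move h5 h6

/-- With two disjoint blobs the builder to move joins them into one blob whose unsaturated
vertices are not adjacent. -/
lemma Blob.win_of_two [Finite V] [DecidableEq V] {G : SimpleGraph V} (hG : Tame G)
    {A B : Set V} {p q r t : V} (hA : Blob G A p q) (hB : Blob G B r t) (hAB : Disjoint A B) :
    Win GoodEvent G := by
  by_cases hP : GoodEvent G
  · exact Win.now hP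
  have hd : ∀ x ∈ A, ∀ y ∈ B, x ≠ y := fun x hx y hy e =>
    Set.disjoint_left.1 hAB hx (e ▸ hy)
  have hpr := hd p hA.memp r hB.memp
  have hpt := hd p hA.memp t hB.memq
  have hqr := hd q hA.memq r hB.memp
  have hqt := hd q hA.memq t hB.memq
  have hna : ¬ G.Adj p r := fun h => hd r (hA.closed _ hA.memp _ h) r hB.memp rfl
  have hdp := hA.degp
  have hdq := hA.degq
  have hdr := hB.degp
  have hdt := hB.degq
  have hl : LegalMove 3 G p r := (legalMove_iff hG.1 p r).2 ⟨hpr, hna, by omega, by omega⟩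
  have hC : Blob (GraphGame.addEdge G p r) (A ∪ B) q t := by
    refine ⟨hqt, Or.inl hA.memq, Or.inr hB.memq, ?_, ?_, ?_, ?_⟩
    · intro a ha b hab
      rw [addEdge_adj hpr] at hab
      rcases hab with hab | ⟨-, rfl⟩ | ⟨-, rfl⟩
      · exact ha.imp (fun h => hA.closed _ h _ hab) fun h => hB.closed _ h _ hab
      · exact Or.inr hB.memp
      · exact Or.inl hA.memp
    · rw [deg_addEdge hpr hna]; simp [hA.ne.symm, hqr, hdq]
    · rw [deg_addEdge hpr hna]; simp [hpt.symm, hB.ne.symm, hdt]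
    · intro v hv h1 h2
      rw [deg_addEdge hpr hna]
      by_cases h3 : v = p
      · subst h3; simp [hpr, hdp]
      by_cases h4 : v = r
      · subst h4; simp [hpr.symm, hdr]
      · have : deg G v = 3 := hv.elim (fun h => hA.deg3 v h h3 h1) fun h => hB.deg3 v h h4 h2
        simp [h3, h4, this]
  have hT : Tame (GraphGame.addEdge G p r) := by
    refine ⟨deg_addEdge_le hl, fun z hz => ?_⟩
    rw [deg_addEdge hpr hna] at hz
    by_cases h3 : z = p
    · subst h3; simp [hdp, hpr] at hz
    by_cases h4 : z = r
    · subst h4; simp [hdr, hpr.symm] at hz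
    by_cases h1 : z = q
    · subst h1; exact ⟨_, _, hC⟩
    by_cases h2 : z = t
    · subst h2; exact ⟨_, _, hC.symm⟩
    simp only [h3, h4, if_false, add_zero] at hz
    obtain ⟨D, z', hD⟩ := hG.2 z hz
    refine ⟨D, z', hD.addEdge hG.1 hl (Ne.symm h3) ?_ (Ne.symm h4) ?_⟩
    · rintro rfl
      exact h1 (Blob.partner_unique hG.1 hP hA hD.symm).symm
    · rintro rfl
      exact h2 (Blob.partner_unique hG.1 hP hB hD.symm).symm
  refine win_of_oppWin hl (hC.oppWin hT ?_)
  rw [addEdge_adj hpr]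
  rintro (h | ⟨h, -⟩ | ⟨h, -⟩)
  · exact hd t (hA.closed _ hA.memq _ h) t hB.memq rfl
  · exact hA.ne h.symm
  · exact hqr h

/-- With two disjoint blobs and all other unsaturated vertices isolated or in blobs, the builder
also wins when the opponent is to move. -/
lemma Blob.oppWin_of_two [Finite V] [DecidableEq V] {G : SimpleGraph V} (hG : Tame G)
    (h1 : ∀ v, deg G v ≠ 1)
    {A B : Set V} {p q r t : V} (hA : Blob G A p q) (hB : Blob G B r t) (hAB : Disjoint A B) :
    OppWin GoodEvent G := by
  by_cases hP : GoodEvent G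
  · exact Or.inl hP
  have hd : ∀ x ∈ A, ∀ y ∈ B, x ≠ y := fun x hx y hy e =>
    Set.disjoint_left.1 hAB hx (e ▸ hy)
  refine Or.inr ⟨fun ht => ht p r ((legalMove_iff hG.1 p r).2 ⟨hd _ hA.memp _ hB.memp, ?_, ?_, ?_⟩),
    fun u v hl => ?_⟩
  · exact fun h => hd r (hA.closed _ hA.memp _ h) r hB.memp rfl
  · rw [hA.degp]; norm_num
  · rw [hB.degp]; norm_num
  obtain ⟨huv, hn, hdu, hdv⟩ := (legalMove_iff hG.1 u v).1 hl
  by_cases hu : deg G u = 2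
  · obtain ⟨D, u', hD⟩ := hG.2 u hu
    exact hD.touch hG hP hl
  by_cases hv : deg G v = 2
  · obtain ⟨D, v', hD⟩ := hG.2 v hv
    rw [addEdge_comm]
    exact hD.touch hG hP hl.symm
  have key : ∀ {D : Set V} {x y : V}, Blob G D x y → Blob (GraphGame.addEdge G u v) D x y := by
    intro D x y hD
    refine hD.addEdge hG.1 hl ?_ ?_ ?_ ?_
    · rintro rfl; exact hu hD.degp
    · rintro rfl; exact hu hD.degq
    · rintro rfl; exact hv hD.degp
    · rintro rfl; exact hv hD.degq
  refine Blob.win_of_two ⟨deg_addEdge_le hl, fun z hz => ?_⟩ (key hA) (key hB) hAB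
  rw [deg_addEdge huv hn] at hz
  have h1u := h1 u
  have h1v := h1 v
  by_cases e1 : z = u
  · subst e1; simp [huv] at hz; omega
  by_cases e2 : z = v
  · subst e2; simp [huv.symm] at hz; omega
  simp only [e1, e2, if_false, add_zero] at hz
  obtain ⟨D, z', hD⟩ := hG.2 z hz
  exact ⟨D, z', key hD⟩

/-! ### Labelled positions -/

/-- The number of entries of `E` at the label `i`. -/
def cnt : List (ℕ × ℕ) → ℕ → ℕ
  | [], _ => 0
  | p :: E, i => (if p.1 = i then 1 else 0) + (if p.2 = i then 1 else 0) + cnt E i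

/-- The degree of the label `i` when the labels are joined by the edges `E`; the labels `0` and
`1` have one further neighbour, without a label. -/
def ldeg (E : List (ℕ × ℕ)) (i : ℕ) : ℕ := (if i < 2 then 1 else 0) + cnt E i

/-- Adjacency of the labels `i` and `j` through the edges `E`. -/
def ladj (E : List (ℕ × ℕ)) (i j : ℕ) : Bool :=
  E.any fun p => (p.1 == i && p.2 == j) || (p.1 == j && p.2 == i)

/-- The edge between the labels `i` and `j` may be added to `E`. -/
def lfree (E : List (ℕ × ℕ)) (i j : ℕ) : Bool :=
  i != j && !ladj E i j && Nat.blt (ldeg E i) 3 && Nat.blt (ldeg E j) 3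

/-- The labels of degree 3 other than `x` have all their labelled neighbours among themselves and
`x`, and the labels `0` and `1` are among them. -/
def lseal (E : List (ℕ × ℕ)) (x : ℕ) : Bool :=
  let ok := fun i => ldeg E i == 3 || i == x
  ok 0 && ok 1 && E.all fun p =>
    (!(ldeg E p.1 == 3) || p.1 == x || ok p.2) && (!(ldeg E p.2 == 3) || p.2 == x || ok p.1)

/-- The position `G` is described by the edges `E` between the labels `0, …, n - 1`.  The label
`i` is carried by the vertex `f i`.  The set `M` consists of saturated vertices and is joined to
its complement only through `f 0` and `f 1`.  The vertices outside `M` without label are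
isolated. -/
structure Described (N : ℕ) (M : Set V) (G : SimpleGraph V) (f : ℕ → V) (n : ℕ)
    (E : List (ℕ × ℕ)) : Prop where
  ne : M.Nonempty
  card : N ≤ Mᶜ.ncard
  inj : ∀ i < n, ∀ j < n, f i = f j → i = j
  notMem : ∀ i < n, f i ∉ M
  two : 2 ≤ n
  lt : ∀ p ∈ E, p.1 < n ∧ p.2 < n
  le : ∀ v, deg G v ≤ 3
  degM : ∀ v ∈ M, deg G v = 3
  adjM : ∀ v ∈ M, ∀ w, G.Adj v w → w ∈ M ∨ w = f 0 ∨ w = f 1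
  degf : ∀ i < n, deg G (f i) = ldeg E i
  adjf : ∀ i < n, ∀ j < n, (G.Adj (f i) (f j) ↔ ladj E i j = true)
  nbr : ∀ i < n, ∀ w, G.Adj (f i) w → w ∈ M ∨ ∃ j < n, w = f j
  out : ∀ v ∉ M, (∀ i < n, f i ≠ v) → deg G v = 0

lemma ladj_iff {E : List (ℕ × ℕ)} {i j : ℕ} :
    ladj E i j = true ↔ (i, j) ∈ E ∨ (j, i) ∈ E := by
  simp only [ladj, List.any_eq_true, Bool.or_eq_true, Bool.and_eq_true, beq_iff_eq, Prod.exists]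
  grind

lemma ladj_cons {E : List (ℕ × ℕ)} {a b i j : ℕ} :
    ladj ((a, b) :: E) i j = true ↔ ladj E i j = true ∨ (i = a ∧ j = b) ∨ (i = b ∧ j = a) := by
  simp only [ladj_iff, List.mem_cons, Prod.mk.injEq]
  tauto

lemma lfree_iff {E : List (ℕ × ℕ)} {i j : ℕ} :
    lfree E i j = true ↔ i ≠ j ∧ ¬ ladj E i j = true ∧ ldeg E i < 3 ∧ ldeg E j < 3 := by
  simp only [lfree, Bool.and_eq_true, bne_iff_ne, Bool.not_eq_true', Nat.blt_eq, and_assoc,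
    Bool.not_eq_true]

lemma ldeg_cons {E : List (ℕ × ℕ)} {a b i : ℕ} :
    ldeg ((a, b) :: E) i =
      ldeg E i + (if i = a then 1 else 0) + (if i = b then 1 else 0) := by
  simp only [ldeg, cnt, eq_comm (a := a), eq_comm (a := b)]
  omega

lemma cnt_eq_zero {E : List (ℕ × ℕ)} {n : ℕ} (h : ∀ p ∈ E, p.1 < n ∧ p.2 < n) : cnt E n = 0 := by
  induction E with
  | nil => rfl
  | cons p E ih =>
    have hp := h p (by simp)
    have h1 : p.1 ≠ n := by omega
    have h2 : p.2 ≠ n := by omega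
    simp [cnt, h1, h2, ih fun q hq => h q (by simp [hq])]

namespace Described

variable {N : ℕ} {M : Set V} {G : SimpleGraph V} {f : ℕ → V} {n : ℕ}
  {E : List (ℕ × ℕ)}

lemma legal_iff [Finite V] (h : Described N M G f n E) {i j : ℕ} (hi : i < n) (hj : j < n) :
    LegalMove 3 G (f i) (f j) ↔ lfree E i j = true := by
  rw [legalMove_iff h.le, lfree_iff, h.adjf i hi j hj, h.degf i hi, h.degf j hj]
  have : f i ≠ f j ↔ i ≠ j :=
    ⟨fun h1 h2 => h1 (h2 ▸ rfl), fun h1 h2 => h1 (h.inj i hi j hj h2)⟩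
  rw [this]

lemma move [Finite V] (h : Described N M G f n E) {i j : ℕ} (hi : i < n) (hj : j < n)
    (hf : lfree E i j = true) : Described N M (addEdge G (f i) (f j)) f n ((i, j) :: E) := by
  classical
  have hl := (h.legal_iff hi hj).2 hf
  obtain ⟨hne, hna, hdi, hdj⟩ := (legalMove_iff h.le _ _).1 hl
  have hinj : ∀ a < n, ∀ b < n, (f a = f b ↔ a = b) := fun a ha b hb =>
    ⟨h.inj a ha b hb, fun e => e ▸ rfl⟩
  refine ⟨h.ne, h.card, h.inj, h.notMem, h.two, ?_, hl.2.2, ?_, ?_, ?_, ?_, ?_, ?_⟩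
  · intro p hp
    rcases List.mem_cons.1 hp with rfl | hp
    · exact ⟨hi, hj⟩
    · exact h.lt p hp
  · intro v hv
    have h1 : v ≠ f i := fun e => h.notMem i hi (e ▸ hv)
    have h2 : v ≠ f j := fun e => h.notMem j hj (e ▸ hv)
    rw [deg_addEdge hne hna]
    simp [h1, h2, h.degM v hv]
  · intro v hv w hw
    rw [addEdge_adj hne] at hw
    rcases hw with hw | ⟨rfl, -⟩ | ⟨rfl, -⟩
    · exact h.adjM v hv w hw
    · exact absurd hv (h.notMem i hi)
    · exact absurd hv (h.notMem j hj)
  · intro a ha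
    rw [deg_addEdge hne hna, ldeg_cons, h.degf a ha]
    simp only [hinj a ha i hi, hinj a ha j hj]
  · intro a ha b hb
    rw [addEdge_adj hne, ladj_cons, h.adjf a ha b hb]
    simp only [hinj a ha i hi, hinj a ha j hj, hinj b hb i hi, hinj b hb j hj]
  · intro a ha w hw
    rw [addEdge_adj hne] at hw
    rcases hw with hw | ⟨-, rfl⟩ | ⟨-, rfl⟩
    · exact h.nbr a ha w hw
    · exact Or.inr ⟨j, hj, rfl⟩
    · exact Or.inr ⟨i, hi, rfl⟩
  · intro v hv hvn
    rw [deg_addEdge hne hna]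
    simp [(hvn i hi).symm, (hvn j hj).symm, h.out v hv hvn]

/-- An isolated vertex without label may receive the next label. -/
lemma name [Finite V] (h : Described N M G f n E) {z : V} (hz : z ∉ M) (hzn : ∀ i < n, f i ≠ z) :
    Described N M G (Function.update f n z) (n + 1) E := by
  have hd := h.out z hz hzn
  have hno : ∀ w, ¬ G.Adj z w := fun w hw => by
    have := deg_pos_of_adj hw
    omega
  have hno' : ∀ w, ¬ G.Adj w z := fun w hw => hno w hw.symm
  have hlt : ∀ i < n, Function.update f n z i = f i := fun i hi =>
    Function.update_of_ne (by omega) _ _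
  have heq : Function.update f n z n = z := Function.update_self _ _ _
  have h2 := h.two
  have hE : ∀ i, ladj E i n ≠ true ∧ ladj E n i ≠ true := by
    intro i
    simp only [ne_eq, ladj_iff]
    constructor <;>
    · rintro (hp | hp)
      · have := h.lt _ hp; simp only at this; omega
      · have := h.lt _ hp; simp only at this; omega
  refine ⟨h.ne, h.card, ?_, ?_, by omega, ?_, h.le, h.degM, ?_, ?_, ?_, ?_, ?_⟩
  · intro i hi j hj hij
    rcases Nat.lt_succ_iff_lt_or_eq.1 hi with hi | rfl <;>
      rcases Nat.lt_succ_iff_lt_or_eq.1 hj with hj | rfl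
    · rw [hlt i hi, hlt j hj] at hij
      exact h.inj i hi j hj hij
    · rw [hlt i hi, heq] at hij
      exact absurd hij (hzn i hi)
    · rw [hlt j hj, heq] at hij
      exact absurd hij.symm (hzn j hj)
    · rfl
  · intro i hi
    rcases Nat.lt_succ_iff_lt_or_eq.1 hi with hi | rfl
    · rw [hlt i hi]; exact h.notMem i hi
    · rw [heq]; exact hz
  · intro p hp
    have := h.lt p hp
    omega
  · rw [hlt 0 (by omega), hlt 1 (by omega)]
    exact h.adjM
  · intro i hi
    rcases Nat.lt_succ_iff_lt_or_eq.1 hi with hi | rfl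
    · rw [hlt i hi]; exact h.degf i hi
    · rw [heq, hd, ldeg, cnt_eq_zero h.lt, if_neg (by omega)]
  · intro i hi j hj
    rcases Nat.lt_succ_iff_lt_or_eq.1 hi with hi | rfl <;>
      rcases Nat.lt_succ_iff_lt_or_eq.1 hj with hj | rfl
    · rw [hlt i hi, hlt j hj]
      exact h.adjf i hi j hj
    · rw [heq]
      exact iff_of_false (hno' _) (hE i).1
    · rw [heq]
      exact iff_of_false (hno _) (hE j).2
    · rw [heq]
      exact iff_of_false (hno _) (hE j).2
  · intro i hi w hw
    rcases Nat.lt_succ_iff_lt_or_eq.1 hi with hi | rfl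
    · rw [hlt i hi] at hw
      rcases h.nbr i hi w hw with h1 | ⟨j, hj, rfl⟩
      · exact Or.inl h1
      · exact Or.inr ⟨j, by omega, (hlt j hj).symm⟩
    · rw [heq] at hw
      exact absurd hw (hno _)
  · intro v hv hvn
    refine h.out v hv fun i hi => ?_
    rw [← hlt i hi]
    exact hvn i (by omega)

lemma exists_fresh (h : Described N M G f n E) (hn : n < N) : ∃ z ∉ M, ∀ i < n, f i ≠ z := by
  by_contra hc
  push Not at hc
  have hsub : Mᶜ ⊆ f '' Set.Iio n := by
    intro z hz
    obtain ⟨i, hi, e⟩ := hc z hz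
    exact ⟨i, hi, e⟩
  have h1 := Set.ncard_le_ncard hsub (Set.toFinite _)
  have h2 : (f '' Set.Iio n).ncard ≤ n := by
    refine (Set.ncard_image_le (Set.finite_Iio n)).trans ?_
    rw [← Finset.coe_Iio, Set.ncard_coe_finset, Nat.card_Iio]
  have := h.card
  omega

lemma goodEvent [Finite V] [DecidableEq V] (h : Described N M G f n E) {x : ℕ}
    (hx : lseal E x = true) : GoodEvent G := by
  have h2 := h.two
  simp only [lseal, Bool.and_eq_true, Bool.or_eq_true, beq_iff_eq, List.all_eq_true,
    Bool.not_eq_true', beq_eq_false_iff_ne] at hx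
  obtain ⟨⟨hx0, hx1⟩, hxE⟩ := hx
  have key : ∀ i < n, (ldeg E i = 3 ∨ i = x) →
      f i ∈ M ∪ {v | ∃ j < n, j ≠ x ∧ ldeg E j = 3 ∧ v = f j} ∨ f i = f x := by
    intro i hi h1
    by_cases e : i = x
    · exact Or.inr (e ▸ rfl)
    · exact Or.inl (Or.inr ⟨i, hi, e, h1.resolve_right e, rfl⟩)
  refine goodEvent_of_sealed h.le
    (S := M ∪ {v | ∃ j < n, j ≠ x ∧ ldeg E j = 3 ∧ v = f j}) (f x) ?_ ?_ ?_
  · obtain ⟨m, hm⟩ := h.ne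
    exact ⟨m, Or.inl hm⟩
  · rintro v (hv | ⟨j, hj, -, hd, rfl⟩)
    · exact h.degM v hv
    · rw [h.degf j hj, hd]
  · rintro a (ha | ⟨i, hi, hix, hd, rfl⟩) b hab
    · rcases h.adjM a ha b hab with hb | rfl | rfl
      · exact Or.inl (Or.inl hb)
      · exact key 0 (by omega) hx0
      · exact key 1 (by omega) hx1
    · rcases h.nbr i hi b hab with hb | ⟨j, hj, rfl⟩
      · exact Or.inl (Or.inl hb)
      · refine key j hj ?_
        rcases ladj_iff.1 ((h.adjf i hi j hj).1 hab) with hp | hp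
        · have := (hxE _ hp).1
          tauto
        · have := (hxE _ hp).2
          tauto

end Described

/-! ### Strategy trees and their verification -/

/-- A strategy tree for the builder, who is to move in a labelled position.
* `done x t`: the event has occurred, as witnessed by the sealing label `x`; otherwise use `t`;
* `win i j x t`: join `i` and `j`, if this produces the event with sealing label `x`; otherwise
  use `t`;
* `on i j s t`: if the last edge drawn was `(i, j)`, use `s`; otherwise use `t`;
* `play i j t`: join `i` and `j` and use `t` after the reply of the opponent. -/
inductive Strat
  | nil : Strat
  | done : ℕ → Strat → Strat
  | win : ℕ → ℕ → ℕ → Strat → Strat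
  | on : ℕ → ℕ → Strat → Strat → Strat
  | play : ℕ → ℕ → Strat → Strat

/-- The number of labels in use after `i` and `j` are joined in a position with `n` labels. -/
def grow (n i j : ℕ) : ℕ := max n (max i j + 1)

/-- The opponent's moves up to the choice of isolated vertices: a new vertex gets the label `n`,
a second one the label `n + 1`. -/
def allReplies (n : ℕ) (E : List (ℕ × ℕ)) (k : ℕ → List (ℕ × ℕ) → Bool) : Bool :=
  k (n + 2) ((n, n + 1) :: E) &&
  (List.range (n + 1)).all fun j => (List.range j).all fun i =>
    !lfree E i j || k (grow n i j) ((i, j) :: E)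

/-- Verification of a strategy tree at the position with `n` labels and edges `E`.  At least 20
vertices outside the saturated set are available. -/
def Strat.check : Strat → ℕ → List (ℕ × ℕ) → Bool
  | .nil, _, _ => false
  | .done x t, n, E => lseal E x || t.check n E
  | .win i j x t, n, E =>
      (Nat.ble i n && Nat.ble j n && Nat.blt n 20 && lfree E i j && lseal ((i, j) :: E) x)
        || t.check n E
  | .on i j s t, n, E => if E.head? == some (i, j) then s.check n E else t.check n E
  | .play i j t, n, E =>
      Nat.ble i n && Nat.ble j n && Nat.blt n 17 && lfree E i j &&
        allReplies (grow n i j) ((i, j) :: E) fun n' E' => t.check n' E'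

section Soundness

variable [Finite V] {M : Set V} {G : SimpleGraph V} {f : ℕ → V} {n : ℕ}
  {E : List (ℕ × ℕ)}

/-- The builder can realize a labelled move, the label `n` standing for a new vertex. -/
lemma Described.play (h : Described 20 M G f n E) {i j : ℕ} (hi : i ≤ n) (hj : j ≤ n)
    (hn : n < 20) (hf : lfree E i j = true) :
    ∃ u v f', LegalMove 3 G u v ∧ Described 20 M (addEdge G u v) f' (grow n i j) ((i, j) :: E) := by
  by_cases hij : i < n ∧ j < n
  · have : grow n i j = n := by unfold grow; omega
    rw [this]
    exact ⟨f i, f j, f, (h.legal_iff hij.1 hij.2).2 hf, h.move hij.1 hij.2 hf⟩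
  · have : grow n i j = n + 1 := by unfold grow; omega
    rw [this]
    obtain ⟨z, hz, hzn⟩ := h.exists_fresh hn
    have h' := h.name hz hzn
    exact ⟨_, _, _, (h'.legal_iff (by omega) (by omega)).2 hf, h'.move (by omega) (by omega) hf⟩

/-- Every move of the opponent is, up to relabelling, one of those listed by `allReplies`. -/
lemma Described.oppWin [DecidableEq V] (h : Described 20 M G f n E) (hn : n < 18)
    {k : ℕ → List (ℕ × ℕ) → Bool} (hk : allReplies n E k = true)
    (hwin : ∀ G' f' n' E', Described 20 M G' f' n' E' → k n' E' = true → Win GoodEvent G') :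
    OppWin GoodEvent G := by
  simp only [allReplies, Bool.and_eq_true, List.all_eq_true, List.mem_range, Bool.or_eq_true,
    Bool.not_eq_true'] at hk
  obtain ⟨hk2, hk1⟩ := hk
  -- two unlabelled vertices
  have hfree2 : lfree E n (n + 1) = true := by
    have h2 := h.two
    rw [lfree_iff]
    have hE' : ∀ p ∈ E, p.1 < n + 1 ∧ p.2 < n + 1 := fun p hp => by
      have := h.lt p hp
      omega
    refine ⟨by omega, ?_, ?_, ?_⟩
    · rw [ladj_iff]
      rintro (hp | hp) <;> · have := h.lt _ hp; simp only at this; omega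
    · rw [ldeg, cnt_eq_zero h.lt]; split_ifs <;> omega
    · rw [ldeg, cnt_eq_zero hE']; split_ifs <;> omega
  refine Or.inr ⟨fun ht => ?_, ?_⟩
  · obtain ⟨z, hz, hzn⟩ := h.exists_fresh (by omega)
    have h1 := h.name hz hzn
    obtain ⟨w, hw, hwn⟩ := h1.exists_fresh (by omega)
    have h2 := h1.name hw hwn
    exact ht _ _ ((h2.legal_iff (i := n) (j := n + 1) (by omega) (by omega)).2 hfree2)
  -- two labelled vertices
  have hlab : ∀ i j, i < j → j < n → LegalMove 3 G (f i) (f j) →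
      Win GoodEvent (addEdge G (f i) (f j)) := by
    intro i j hij hj hl
    have hf := (h.legal_iff (by omega) hj).1 hl
    have h1 := (hk1 j (by omega) i hij).resolve_left (by simp [hf])
    have : grow n i j = n := by unfold grow; omega
    rw [this] at h1
    exact hwin _ _ _ _ (h.move (by omega) hj hf) h1
  -- a labelled and an unlabelled vertex
  have hmix : ∀ i < n, ∀ z ∉ M, (∀ i < n, f i ≠ z) → LegalMove 3 G (f i) z →
      Win GoodEvent (addEdge G (f i) z) := by
    intro i hi z hz hzn hl
    have h' := h.name hz hzn
    have e1 : Function.update f n z i = f i := Function.update_of_ne (by omega) _ _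
    have e2 : Function.update f n z n = z := Function.update_self _ _ _
    have hf := (h'.legal_iff (i := i) (j := n) (by omega) (by omega)).1 (by rwa [e1, e2])
    have h1 := (hk1 n (by omega) i hi).resolve_left (by simp [hf])
    have : grow n i n = n + 1 := by unfold grow; omega
    rw [this] at h1
    have h3 := h'.move (i := i) (j := n) (by omega) (by omega) hf
    rw [e1, e2] at h3
    exact hwin _ _ _ _ h3 h1
  intro a b hl
  obtain ⟨hab, -, hda, hdb⟩ := (legalMove_iff h.le a b).1 hl
  have haM : a ∉ M := fun ha => by
    have := h.degM a ha
    omega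
  have hbM : b ∉ M := fun hb => by
    have := h.degM b hb
    omega
  by_cases ha : ∀ i < n, f i ≠ a <;> by_cases hb : ∀ i < n, f i ≠ b
  · have h1 := h.name haM ha
    have hb' : ∀ i < n + 1, Function.update f n a i ≠ b := by
      intro i hi
      rcases Nat.lt_succ_iff_lt_or_eq.1 hi with hi | rfl
      · rw [Function.update_of_ne (by omega)]; exact hb i hi
      · rw [Function.update_self]; exact hab
    have h2 := h1.name hbM hb'
    have h3 := h2.move (i := n) (j := n + 1) (by omega) (by omega) hfree2
    rw [Function.update_self, Function.update_of_ne (by omega), Function.update_self] at h3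
    exact hwin _ _ _ _ h3 hk2
  · push Not at hb
    obtain ⟨j, hj, rfl⟩ := hb
    rw [addEdge_comm]
    exact hmix j hj a haM ha hl.symm
  · push Not at ha
    obtain ⟨i, hi, rfl⟩ := ha
    exact hmix i hi b hbM hb hl
  · push Not at ha hb
    obtain ⟨i, hi, rfl⟩ := ha
    obtain ⟨j, hj, rfl⟩ := hb
    rcases Nat.lt_trichotomy i j with hij | rfl | hij
    · exact hlab i j hij hj hl
    · exact absurd rfl hab
    · rw [addEdge_comm]
      exact hlab j i hij hi hl.symm

lemma Strat.check_sound [DecidableEq V] (s : Strat) : ∀ (G : SimpleGraph V) (f : ℕ → V) (n : ℕ)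
    (E : List (ℕ × ℕ)), Described 20 M G f n E → s.check n E = true → Win GoodEvent G := by
  induction s with
  | nil => intro G f n E _ hc; simp [Strat.check] at hc
  | done x t ih =>
    intro G f n E h hc
    simp only [Strat.check, Bool.or_eq_true] at hc
    exact hc.elim (fun hx => Win.now (h.goodEvent hx)) (ih G f n E h)
  | win i j x t ih =>
    intro G f n E h hc
    simp only [Strat.check, Bool.or_eq_true, Bool.and_eq_true, Nat.ble_eq, Nat.blt_eq] at hc
    rcases hc with ⟨⟨⟨⟨hi, hj⟩, hn⟩, hf⟩, hx⟩ | hc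
    · obtain ⟨u, v, f', hl, hd⟩ := h.play hi hj hn hf
      exact win_of_move hl (hd.goodEvent hx)
    · exact ih G f n E h hc
  | on i j s t ihs iht =>
    intro G f n E h hc
    simp only [Strat.check] at hc
    split_ifs at hc
    · exact ihs G f n E h hc
    · exact iht G f n E h hc
  | play i j t ih =>
    intro G f n E h hc
    simp only [Strat.check, Bool.and_eq_true, Nat.ble_eq, Nat.blt_eq] at hc
    obtain ⟨⟨⟨⟨hi, hj⟩, hn⟩, hf⟩, hr⟩ := hc
    obtain ⟨u, v, f', hl, hd⟩ := h.play hi hj (by omega) hf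
    exact win_of_oppWin hl (hd.oppWin (by unfold grow; omega) hr ih)

end Soundness

/-! ### The strategies against an isolated component of type ℋ -/

namespace Strat

/-- Join `a` and `b`, after which the described component has only the two unsaturated vertices
`x` and `y`, each of degree 2, and all `n` labels belong to it.  If the opponent touches neither
of them or both of them, joining them closes the component, and if the opponent joins one of
them to a new vertex, so does the builder with the other one. -/
def pinch (a b x y n : ℕ) : Strat :=
  .play a b (.done 0 (.win x y 0 (.win x n n (.win y n n .nil))))

/-- Join `a` and `b`, after which the unsaturated vertices are `c`, `x` and `6`, each of degree 2,
with `x` and `6` adjacent.  Unless the opponent joins `c` to a new vertex `7`, either `c` has been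
joined to `x` or to `6`, or the builder does so; then the other one of `x` and `6` is an eventual
cut vertex. -/
def trap (a b c x : ℕ) : Strat :=
  .play a b (.on c 7 (pinch x 7 6 7 8) (.done x (.done 6 (.win c x 6 (.win c 6 x .nil)))))

/-- As `pinch`, for a component whose unsaturated vertices are `4` and `q`, in the presence of a
separate component that is the single edge between `c` and `c + 1`. -/
def fork (a b q c : ℕ) : Strat :=
  .play a b (.done 0 (.win 4 q 0
    (.win 4 c c (.win 4 (c + 1) c (.win 4 8 8 (.win q c c (.win q (c + 1) c (.win q 8 8 .nil))))))))

/-- Add `k` to every label of a strategy tree. -/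
def shift (k : ℕ) : Strat → Strat
  | .nil => .nil
  | .done x t => .done (x + k) (t.shift k)
  | .win i j x t => .win (i + k) (j + k) (x + k) (t.shift k)
  | .on i j s t => .on (i + k) (j + k) (s.shift k) (t.shift k)
  | .play i j t => .play (i + k) (j + k) (t.shift k)

/-- The strategy of the builder moving first, the labels `0` and `1` being the vertices of degree
2 of the component. -/
def first : Strat :=
  (.play 0 2
   (.on 1 3
    (.play 2 4
     (.on 2 5
      (.play 3 4
       (.on 3 6 (trap 5 6 4 5)
       (.on 4 6 (trap 5 6 3 5)
       (.on 5 6 (trap 3 6 4 5)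
       (.on 6 7 (fork 3 5 5 6)
       (.win 3 5 0 (.win 4 5 0 .nil)))))))
     (.on 3 5
      (.play 2 5
       (.on 3 6 (trap 4 6 5 4)
       (.on 4 6 (trap 3 6 5 4)
       (.on 5 6 (trap 4 6 3 4)
       (.on 6 7 (fork 3 4 5 6)
       (.win 3 4 0 (.win 4 5 0 .nil)))))))
     (.on 4 5
      (.play 3 4
       (.on 2 6 (trap 5 6 3 5)
       (.on 3 6 (trap 5 6 2 5)
       (.done 4 (.win 2 3 4 (.win 2 5 0 (.win 3 5 0 .nil)))))))
     (.on 5 6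
      (.play 3 4
       (.on 2 5 (trap 3 6 4 5)
       (.on 2 6 (trap 3 5 4 5)
       (.on 2 7 (fork 3 7 7 5)
       (.on 3 5 (trap 2 6 4 5)
       (.on 3 6 (trap 2 5 4 5)
       (.on 3 7 (fork 2 7 7 5)
       (.done 4 (.win 2 3 4 .nil)))))))))
     (.win 2 3 4 (.win 3 4 4 .nil)))))))
   (.done 2 (.win 1 2 2 .nil))))

/-- The strategy of the builder moving second.  When the opponent opens with a separate edge
`{2, 3}`, the builder joins it to the component; after the reply `{1, 3}` the component is again
of type ℋ, now with the vertices `2` and `3` of degree 2. -/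
def second : Strat :=
  (.on 2 3
   (.play 0 2
    (.on 1 3 (shift 2 first)
    (.on 1 4
     (.play 3 4
      (.on 2 5 (pinch 3 5 4 5 6)
      (.on 4 5 (pinch 2 5 3 5 6)
      (.done 3 (.win 2 4 3 .nil)))))
    (.on 2 4
     (.play 3 4
      (.on 1 5 (pinch 3 5 4 5 6)
      (.done 3 (.done 4 (.win 1 3 4 (.win 1 4 3 .nil))))))
    (.done 2 (.win 1 2 2 .nil))))))
   (.win 0 2 2 (.win 1 2 2 .nil)))

lemma check_first : first.check 2 [(0, 1)] = true := by decide +kernel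

lemma check_second : allReplies 2 [(0, 1)] (fun n E => second.check n E) = true := by
  decide +kernel

end Strat

/-! ### The structure of the initial graph -/

section Structure

variable {G : SimpleGraph V}

lemma supp_closed (c : G.ConnectedComponent) : ∀ a ∈ c.supp, ∀ b, G.Adj a b → b ∈ c.supp :=
  fun _ ha _ hab => (SimpleGraph.ConnectedComponent.mem_supp_congr_adj c hab).1 ha

lemma sum_le_Fdof [Finite V] (hG : ∀ v, deg G v ≤ 3) {A : Set V} {t : Finset V}
    (ht : ∀ v ∈ t, v ∈ A) : ∑ v ∈ t, (3 - (deg G v : ℤ)) ≤ Fdof G A := by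
  rw [Fdof, finsum_mem_eq_finite_toFinset_sum _ (Set.toFinite A)]
  refine Finset.sum_le_sum_of_subset_of_nonneg (fun v hv => by simpa using ht v hv) ?_
  intro v _ _
  have := hG v
  omega

lemma deg_pos_of_mem_supp [Finite V] {z : V} (hz : 0 < deg G z) :
    ∀ v ∈ (G.connectedComponentMk z).supp, 0 < deg G v :=
  supp_subset_of_closed (S := {v | 0 < deg G v}) hz fun _ _ _ hab => deg_pos_of_adj hab.symm

/-- As long as the event has not occurred, every component with an edge has two unsaturated
vertices: a single one would be an eventual cut vertex. -/
lemma exists_two_unsaturated [Finite V] [DecidableEq V] (hG : ∀ v, deg G v ≤ 3)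
    (hP : ¬ GoodEvent G) {z : V} (hz : 0 < deg G z) :
    ∃ p ∈ (G.connectedComponentMk z).supp, ∃ q ∈ (G.connectedComponentMk z).supp,
      p ≠ q ∧ deg G p < 3 ∧ deg G q < 3 := by
  by_contra hc
  push Not at hc
  set c := G.connectedComponentMk z with hcdef
  have hzc : z ∈ c.supp := rfl
  by_cases h : ∃ x ∈ c.supp, deg G x < 3
  · obtain ⟨x, hx, hdx⟩ := h
    refine hP (goodEvent_of_sealed hG (S := c.supp \ {x}) x ?_ ?_ ?_)
    · obtain ⟨y, hy⟩ := exists_adj_of_deg_pos (deg_pos_of_mem_supp hz x hx)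
      exact ⟨y, supp_closed c x hx y hy, hy.ne'⟩
    · rintro v ⟨hv, hvx⟩
      exact le_antisymm (hG v) (hc x hx v hv (Ne.symm hvx) hdx)
    · rintro a ⟨ha, -⟩ b hab
      by_cases e : b = x
      · exact Or.inr e
      · exact Or.inl ⟨supp_closed c a ha b hab, e⟩
  · push Not at h
    exact hP (Or.inl ⟨c, fun v hv => le_antisymm (hG v) (h v hv)⟩)

lemma two_le_Fdof [Finite V] [DecidableEq V] (hG : ∀ v, deg G v ≤ 3)
    (hP : ¬ GoodEvent G) {z : V} (hz : 0 < deg G z) :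
    2 ≤ Fdof G (G.connectedComponentMk z).supp := by
  obtain ⟨p, hp, q, hq, hpq, hdp, hdq⟩ := exists_two_unsaturated hG hP hz
  have h := sum_le_Fdof hG (A := (G.connectedComponentMk z).supp) (t := {p, q})
    (by simp only [Finset.mem_insert, Finset.mem_singleton]; rintro v (rfl | rfl) <;> assumption)
  rw [Finset.sum_pair hpq] at h
  omega

/-- A component with two degrees of freedom is a blob. -/
lemma exists_blob_of_Fdof [Finite V] [DecidableEq V] (hG : ∀ v, deg G v ≤ 3)
    (hP : ¬ GoodEvent G) {z : V} (hz : 0 < deg G z)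
    (hF : Fdof G (G.connectedComponentMk z).supp = 2) :
    ∃ p q, Blob G (G.connectedComponentMk z).supp p q := by
  obtain ⟨p, hp, q, hq, hpq, hdp, hdq⟩ := exists_two_unsaturated hG hP hz
  have h := sum_le_Fdof hG (A := (G.connectedComponentMk z).supp) (t := {p, q})
    (by simp only [Finset.mem_insert, Finset.mem_singleton]; rintro v (rfl | rfl) <;> assumption)
  rw [Finset.sum_pair hpq, hF] at h
  refine ⟨p, q, hpq, hp, hq, supp_closed _, by omega, by omega, fun v hv hvp hvq => ?_⟩
  have h' := sum_le_Fdof hG (A := (G.connectedComponentMk z).supp) (t := {v, p, q})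
    (by
      simp only [Finset.mem_insert, Finset.mem_singleton]
      rintro v (rfl | rfl | rfl) <;> assumption)
  rw [Finset.sum_insert (by simp [hvp, hvq]), Finset.sum_pair hpq, hF] at h'
  have := hG v
  omega

/-- If the effective freedom vanishes and the event has not occurred, every component outside
`c₀` with an edge is a blob. -/
lemma exists_blob_of_Edof [Finite V] [DecidableEq V] (hG : ∀ v, deg G v ≤ 3)
    (hP : ¬ GoodEvent G) {c₀ : G.ConnectedComponent}
    (hE : Edof G {v : V | 0 < deg G v ∧ v ∉ c₀.supp} = 0) {z : V} (hz : 0 < deg G z)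
    (hz₀ : z ∉ c₀.supp) : ∃ p q, Blob G (G.connectedComponentMk z).supp p q := by
  apply exists_blob_of_Fdof hG hP hz
  have : Finite G.ConnectedComponent := Quot.finite _
  rw [Edof, finsum_mem_eq_finite_toFinset_sum _ (Set.toFinite _),
    Finset.sum_eq_zero_iff_of_nonneg] at hE
  · have := hE (G.connectedComponentMk z) (by
      simp only [Set.Finite.mem_toFinset, Set.mem_ofPred_eq]
      intro v hv
      refine ⟨deg_pos_of_mem_supp hz v hv, fun hv₀ => hz₀ ?_⟩
      rw [SimpleGraph.ConnectedComponent.mem_supp_iff] at hv hv₀ ⊢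
      rw [← hv₀, ← hv])
    omega
  · intro c hc
    simp only [Set.Finite.mem_toFinset, Set.mem_ofPred_eq] at hc
    induction c using SimpleGraph.ConnectedComponent.ind with
    | h w =>
      have := two_le_Fdof hG hP (hc (show w ∈ _ from rfl)).1
      omega

lemma exists_blob_of_typeH {c₀ : G.ConnectedComponent} (h : CompTypeH G c₀) :
    ∃ p q, Blob G c₀.supp p q ∧ G.Adj p q := by
  obtain ⟨h1, h2, h3⟩ := h
  obtain ⟨p, q, hpq, he⟩ := Set.ncard_eq_two.1 h2
  have hp : p ∈ {v ∈ c₀.supp | deg G v = 2} := by rw [he]; simp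
  have hq : q ∈ {v ∈ c₀.supp | deg G v = 2} := by rw [he]; simp
  refine ⟨p, q, ⟨hpq, hp.1, hq.1, supp_closed c₀, hp.2, hq.2, fun v hv hvp hvq => ?_⟩,
    h3 p q hp.1 hq.1 hp.2 hq.2 hpq⟩
  refine (h1 v hv).resolve_left fun h => ?_
  have : v ∈ {v ∈ c₀.supp | deg G v = 2} := ⟨hv, h⟩
  rw [he] at this
  simp [hvp, hvq] at this

/-- A blob with adjacent vertices of degree 2, all other vertices being isolated, is the initial
labelled position. -/
lemma Blob.described [Finite V] (hG : ∀ v, deg G v ≤ 3) {A : Set V} {p q : V}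
    (hA : Blob G A p q) (hpq : G.Adj p q) (hiso : 20 ≤ ({v : V | deg G v = 0}).ncard)
    (hout : ∀ v ∉ A, deg G v = 0) :
    ∃ f, Described 20 (A \ {p, q}) G f 2 [(0, 1)] := by
  have hlt : ∀ i, i < 2 ↔ i = 0 ∨ i = 1 := by omega
  have hadj : ∀ a ∈ A, ∀ w, G.Adj a w → w ∈ A \ {p, q} ∨ w = p ∨ w = q := by
    intro a ha w hw
    by_cases e : w = p ∨ w = q
    · exact Or.inr e
    · exact Or.inl ⟨hA.closed a ha w hw, e⟩
  refine ⟨fun i => if i = 0 then p else q, ?_, ?_, ?_, ?_, le_rfl, ?_, hG, ?_, ?_, ?_, ?_, ?_, ?_⟩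
  · have h2 : (G.neighborSet p).ncard = 2 := hA.degp
    obtain ⟨y, hy, hyq⟩ := Set.exists_ne_of_one_lt_ncard (by omega : 1 < (G.neighborSet p).ncard) q
    have hy' : G.Adj p y := hy
    refine ⟨y, hA.closed p hA.memp y hy', ?_⟩
    rintro (e | e)
    · exact hy'.ne' e
    · exact hyq e
  · refine hiso.trans (Set.ncard_le_ncard (fun v hv hvA => ?_) (Set.toFinite _))
    have h0 : deg G v = 0 := hv
    have h3 := hA.deg3 v hvA.1 (fun e => hvA.2 (Or.inl e)) (fun e => hvA.2 (Or.inr e))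
    omega
  · intro i hi j hj
    rcases (hlt i).1 hi with rfl | rfl <;> rcases (hlt j).1 hj with rfl | rfl <;>
      simp [hA.ne, hA.ne.symm]
  · intro i hi
    rcases (hlt i).1 hi with rfl | rfl <;> simp
  · simp
  · rintro v ⟨hv, hv'⟩
    exact hA.deg3 v hv (fun e => hv' (Or.inl e)) (fun e => hv' (Or.inr e))
  · rintro v ⟨hv, -⟩ w hw
    simpa using hadj v hv w hw
  · intro i hi
    rcases (hlt i).1 hi with rfl | rfl <;> simp [hA.degp, hA.degq, ldeg, cnt]
  · intro i hi j hj
    rcases (hlt i).1 hi with rfl | rfl <;> rcases (hlt j).1 hj with rfl | rfl <;>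
      simp [hpq, hpq.symm, ladj]
  · intro i hi w hw
    have hi' : (if i = 0 then p else q) ∈ A := by split_ifs; exacts [hA.memp, hA.memq]
    rcases hadj _ hi' w hw with h | rfl | rfl
    · exact Or.inl h
    · exact Or.inr ⟨0, by norm_num, by simp⟩
    · exact Or.inr ⟨1, by norm_num, by simp⟩
  · intro v hv hvn
    refine hout v fun hvA => hv ⟨hvA, ?_⟩
    rintro (e | e)
    · exact hvn 0 (by norm_num) (by simp [e])
    · exact hvn 1 (by norm_num) (by simpa using e.symm)

/-- The builder reaches the event from the initial graph, whoever moves first. -/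
lemma win_and_oppWin [Finite V] [DecidableEq V] (hG : ∀ v, deg G v ≤ 3)
    (hiso : 20 ≤ ({v : V | deg G v = 0}).ncard) {c₀ : G.ConnectedComponent}
    (hH : CompTypeH G c₀) (hE : Edof G {v : V | 0 < deg G v ∧ v ∉ c₀.supp} = 0) :
    Win GoodEvent G ∧ OppWin GoodEvent G := by
  by_cases hP : GoodEvent G
  · exact ⟨Win.now hP, Or.inl hP⟩
  obtain ⟨p, q, hA, hpq⟩ := exists_blob_of_typeH hH
  by_cases hout : ∀ v ∉ c₀.supp, deg G v = 0
  · obtain ⟨f, hf⟩ := hA.described hG hpq hiso hout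
    exact ⟨Strat.check_sound _ _ _ _ _ hf Strat.check_first,
      hf.oppWin (by norm_num) Strat.check_second (Strat.check_sound Strat.second)⟩
  push Not at hout
  obtain ⟨z, hz₀, hz⟩ := hout
  have hblob : ∀ v, 0 < deg G v → ∃ B r t, v ∈ B ∧ Blob G B r t := by
    intro v hv
    by_cases hv₀ : v ∈ c₀.supp
    · exact ⟨_, p, q, hv₀, hA⟩
    · obtain ⟨r, t, hB⟩ := exists_blob_of_Edof hG hP hE hv hv₀
      exact ⟨(G.connectedComponentMk v).supp, r, t, rfl, hB⟩
  have hT : Tame G := by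
    refine ⟨hG, fun v hv => ?_⟩
    obtain ⟨B, r, t, hvB, hB⟩ := hblob v (by omega)
    rcases hB.eq_or_eq hvB (by omega) with rfl | rfl
    · exact ⟨B, t, hB⟩
    · exact ⟨B, r, hB.symm⟩
  have h1 : ∀ v, deg G v ≠ 1 := by
    intro v hv
    obtain ⟨B, r, t, hvB, hB⟩ := hblob v (by omega)
    have hr := hB.degp
    have ht := hB.degq
    rcases hB.eq_or_eq hvB (by omega) with rfl | rfl <;> omega
  obtain ⟨r, t, hB⟩ := exists_blob_of_Edof hG hP hE (Nat.pos_of_ne_zero hz) hz₀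
  have hAB : Disjoint c₀.supp (G.connectedComponentMk z).supp := by
    rw [Set.disjoint_left]
    intro v hv₀ hv
    rw [SimpleGraph.ConnectedComponent.mem_supp_iff] at hv hv₀
    exact hz₀ (by rw [SimpleGraph.ConnectedComponent.mem_supp_iff, ← hv₀, ← hv])
  exact ⟨Blob.win_of_two hT hA hB hAB, Blob.oppWin_of_two hT h1 hA hB hAB⟩

end Structure

end GraphGame

open GraphGame in
/-- There is a `K` with the following property.  Suppose `G₀` is a finite simple graph (of
maximum degree at most 3, as all positions of the 3-regular game are) with at least `K`
isolated vertices, whose non-isolated vertices form one connected component `c₀` of type ℋ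
together with further connected components `D¹, …, Dʲ` with `Σᵢ (F(Dⁱ) - 2) = 0`.  Then in
the 3-regular graph game starting from `G₀`, the first player (and likewise the second
player) has a strategy forcing that at some stage some connected component of the current
graph is 3-regular or has an eventual cut vertex. -/
theorem typeH_with_zero_effective_freedom_forces_blocking_component :
    ∃ K : ℕ, ∀ (V : Type) [Fintype V] [DecidableEq V] (G₀ : SimpleGraph V),
      (∀ v, deg G₀ v ≤ 3) →
      K ≤ ({v : V | deg G₀ v = 0}).ncard →
      ∀ c₀ : G₀.ConnectedComponent,
        CompTypeH G₀ c₀ →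
        Edof G₀ {v : V | 0 < deg G₀ v ∧ v ∉ c₀.supp} = 0 →
        Forces 3 0 G₀ (fun G => GoodEvent G) ∧
        Forces 3 1 G₀ (fun G => GoodEvent G) := by
  refine ⟨20, fun V _ _ G₀ hG hiso c₀ hH hE => ?_⟩
  obtain ⟨hw, ho⟩ := win_and_oppWin hG hiso hH hE
  have : Nonempty V := ⟨c₀.exists_rep.choose⟩
  exact ⟨forces_of_win hw, forces_of_oppWin ho⟩
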